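/- Let λ > 0 and x ∈ ℝ³, set r = 2π/√λ, and let φ be a smooth real-valued function defined on an open neighborhood of the closed ball B(x, r) ⊂ ℝ³ satisfying Δφ = −λφ there. Then ∫_{‖x−y‖ ≤ 2π λ^{-1/2}} φ(y)/‖y−x‖ dy = 0; that is, on every ball of radius 2π λ^{-1/2} the positive and negative mass of φ balance exactly with respect to the Coulomb kernel, regardless of the value φ(x). -/

import Mathlib

open scoped Real
open MeasureTheory

/-- The Euclidean Laplacian `Δf(x) = Σᵢ ∂²f/∂xᵢ²(x)` of `f : ℝ^d → ℝ`. -/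
noncomputable def euclidLaplacian {d : ℕ} (f : EuclideanSpace ℝ (Fin d) → ℝ)
    (x : EuclideanSpace ℝ (Fin d)) : ℝ :=
  ∑ i, fderiv ℝ (fun y => fderiv ℝ f y (EuclideanSpace.single i 1)) x (EuclideanSpace.single i 1)

open scoped Pointwise Topology
open Set Filter Metric Laplacian InnerProductSpace

/-!
Let `M ρ` be the integral of `φ (x + ρ s)` over the unit sphere. In dimension three the function
`w ρ = ρ * M ρ` satisfies `w'' = ρ * ∫ Δφ (x + ρ s) ds = -λ w` (Darboux) with `w 0 = 0` and
`w' 0 = 4π φ x`, and polar coordinates turn the Coulomb integral over the ball of radius `r` into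
`∫₀ʳ w = 4π (1 - cos (√λ r)) / λ * φ x`, which vanishes after a full period `√λ r = 2π`.

Darboux's identity needs no divergence theorem: rotations preserve the surface measure, so the
derivative of any function along an infinitesimal rotation has zero integral over the sphere, and
summing this over the rotations in coordinate planes expresses tangential derivatives through
normal ones.
-/

theorem integrable_of_continuous_of_compactSpace {K F : Type*} [TopologicalSpace K] [CompactSpace K]
    [MeasurableSpace K] [OpensMeasurableSpace K] {μ : Measure K} [IsFiniteMeasureOnCompacts μ]
    [NormedAddCommGroup F] {f : K → F} (hf : Continuous f) : Integrable f μ :=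
  hf.integrable_of_hasCompactSupport (HasCompactSupport.of_compactSpace f)

theorem hasDerivAt_integral_of_continuousOn {K F : Type*} [TopologicalSpace K] [CompactSpace K]
    [MeasurableSpace K] [OpensMeasurableSpace K] {μ : Measure K} [IsFiniteMeasure μ]
    [NormedAddCommGroup F] [NormedSpace ℝ F] {f f' : ℝ → K → F} {W : Set (ℝ × K)}
    (hW : IsOpen W) {t : ℝ} (ht : ∀ s, (t, s) ∈ W) (hf : ContinuousOn (Function.uncurry f) W)
    (hf' : ContinuousOn (Function.uncurry f') W)
    (hderiv : ∀ p ∈ W, HasDerivAt (f · p.2) (f' p.1 p.2) p.1) :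
    HasDerivAt (fun u => ∫ s, f u s ∂μ) (∫ s, f' t s ∂μ) t := by
  obtain ⟨V, Z, hV, -, htV, hZ, hVW⟩ :=
    generalized_tube_lemma (isCompact_singleton (x := t)) (isCompact_univ (X := K)) hW
      (by rintro ⟨u, s⟩ ⟨rfl, -⟩; exact ht s)
  obtain ⟨ε, hε, hεV⟩ := nhds_basis_closedBall.mem_iff.1 (hV.mem_nhds (htV rfl))
  have htube : closedBall t ε ×ˢ (univ : Set K) ⊆ W := (prod_mono hεV hZ).trans hVW
  have hslice {g : ℝ → K → F} (hg : ContinuousOn (Function.uncurry g) W) {u : ℝ}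
      (hu : u ∈ closedBall t ε) : Continuous (g u) :=
    hg.comp_continuous (f := fun s : K => (u, s)) (by fun_prop) fun s => htube ⟨hu, mem_univ s⟩
  have hmem : closedBall t ε ∈ 𝓝 t := closedBall_mem_nhds t hε
  obtain ⟨C, hC⟩ := ((isCompact_closedBall t ε).prod isCompact_univ).exists_bound_of_continuousOn
    (hf'.mono htube)
  exact (hasDerivAt_integral_of_dominated_loc_of_deriv_le hmem
    (eventually_of_mem hmem fun u hu =>
      (hslice hf hu).aestronglyMeasurable_of_compactSpace)
    (integrable_of_continuous_of_compactSpace (hslice hf (mem_of_mem_nhds hmem)))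
    (hslice hf' (mem_of_mem_nhds hmem)).aestronglyMeasurable_of_compactSpace
    (ae_of_all _ fun s u hu => hC (u, s) ⟨hu, mem_univ s⟩) (integrable_const C)
    (ae_of_all _ fun s u hu => hderiv (u, s) (htube ⟨hu, mem_univ s⟩))).2

section ExpSkew

variable {E : Type*} [NormedAddCommGroup E] [CompleteSpace E]

theorem hasDerivAt_exp_smul_apply [NormedSpace ℝ E] (A : E →L[ℝ] E) (v : E) (t : ℝ) :
    HasDerivAt (fun u : ℝ => NormedSpace.exp (u • A) v) (A (NormedSpace.exp (t • A) v)) t := by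
  simpa using (hasDerivAt_exp_smul_const' A t).clm_apply (hasDerivAt_const t v)

theorem norm_exp_smul_apply_of_inner_apply_eq_zero [InnerProductSpace ℝ E] {A : E →L[ℝ] E}
    (hA : ∀ v, ⟪v, A v⟫_ℝ = 0) (t : ℝ) (v : E) : ‖NormedSpace.exp (t • A) v‖ = ‖v‖ := by
  have hderiv (u : ℝ) : HasDerivAt (fun u : ℝ => ‖NormedSpace.exp (u • A) v‖ ^ 2) 0 u := by
    simpa [hA] using (hasDerivAt_exp_smul_apply A v u).norm_sq
  have hconst := is_const_of_deriv_eq_zero (fun u => (hderiv u).differentiableAt)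
    (fun u => (hderiv u).deriv) t 0
  simpa using (sq_eq_sq₀ (norm_nonneg _) (norm_nonneg _)).1 hconst

end ExpSkew

section Sphere

variable {E F : Type*} [NormedAddCommGroup E] [InnerProductSpace ℝ E] [FiniteDimensional ℝ E]
  [NormedAddCommGroup F] [NormedSpace ℝ F]

/-- The isometry `exp (t A)` of the rotation flow generated by a skew operator `A`. -/
noncomputable def rotationFlow {A : E →L[ℝ] E} (hA : ∀ v, ⟪v, A v⟫_ℝ = 0) (t : ℝ) : E ≃ₗᵢ[ℝ] E :=
  have := FiniteDimensional.complete ℝ E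
  LinearIsometry.toLinearIsometryEquiv
    ⟨(NormedSpace.exp (t • A)).toLinearMap, norm_exp_smul_apply_of_inner_apply_eq_zero hA t⟩ rfl

variable [MeasurableSpace E] [BorelSpace E]

theorem integral_toSphere_comp_linearIsometryEquiv (T : E ≃ₗᵢ[ℝ] E) (f : E → F) :
    ∫ s : sphere (0 : E) 1, f (T s) ∂(volume : Measure E).toSphere =
      ∫ s : sphere (0 : E) 1, f s ∂(volume : Measure E).toSphere := by
  let τ : sphere (0 : E) 1 ≃ₜ sphere (0 : E) 1 := T.toHomeomorph.subtype fun v => by simp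
  have himage (u : Set (sphere (0 : E) 1)) :
      Ioo (0 : ℝ) 1 • ((↑) '' (τ ⁻¹' u) : Set E) =
        T ⁻¹' (Ioo (0 : ℝ) 1 • ((↑) '' u : Set E)) := by
    have hcoe : ((↑) '' (τ ⁻¹' u) : Set E) = T.symm '' ((↑) '' u) := by
      rw [← τ.image_symm, image_image, image_image]
      rfl
    rw [hcoe]
    exact (image_image2_distrib_right (map_smul T.symm)).symm.trans
      (T.toEquiv.image_symm_eq_preimage _)
  have hτ : MeasurePreserving τ (volume : Measure E).toSphere (volume : Measure E).toSphere := by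
    refine ⟨τ.measurable, Measure.ext fun u hu => ?_⟩
    rw [Measure.map_apply τ.measurable hu, Measure.toSphere_apply' _ (τ.measurable hu),
      Measure.toSphere_apply' _ hu, himage,
      T.measurePreserving.measure_preimage_emb T.toHomeomorph.measurableEmbedding]
  exact hτ.integral_comp τ.measurableEmbedding (fun s => f s)

theorem integral_toSphere_fderiv_apply_of_inner_apply_eq_zero {A : E →L[ℝ] E}
    (hA : ∀ v, ⟪v, A v⟫_ℝ = 0) {U : Set E} (hU : IsOpen U) (hSU : sphere 0 1 ⊆ U) {f : E → F}
    (hf : ContDiffOn ℝ 1 f U) :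
    ∫ s : sphere (0 : E) 1, fderiv ℝ f s (A s) ∂(volume : Measure E).toSphere = 0 := by
  have := FiniteDimensional.complete ℝ E
  have hflow (t : ℝ) (s : sphere (0 : E) 1) : NormedSpace.exp (t • A) (s : E) ∈ U :=
    hSU (by simp [norm_exp_smul_apply_of_inner_apply_eq_zero hA])
  have hcont : Continuous fun p : ℝ × sphere (0 : E) 1 => NormedSpace.exp (p.1 • A) (p.2 : E) := by
    have hexp : Continuous fun t : ℝ => NormedSpace.exp (t • A) :=
      continuous_iff_continuousAt.2 fun t => (hasDerivAt_exp_smul_const A t).continuousAt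
    exact (hexp.comp continuous_fst).clm_apply (by fun_prop)
  have hderiv : HasDerivAt
      (fun t : ℝ => ∫ s : sphere (0 : E) 1, f (NormedSpace.exp (t • A) (s : E))
        ∂(volume : Measure E).toSphere)
      (∫ s : sphere (0 : E) 1, fderiv ℝ f (NormedSpace.exp ((0 : ℝ) • A) (s : E))
        (A (NormedSpace.exp ((0 : ℝ) • A) (s : E))) ∂(volume : Measure E).toSphere) 0 := by
    refine hasDerivAt_integral_of_continuousOn (W := univ) (K := sphere (0 : E) 1) isOpen_univ
      (fun _ => mem_univ _) (f' := fun t s => fderiv ℝ f (NormedSpace.exp (t • A) (s : E))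
        (A (NormedSpace.exp (t • A) (s : E)))) ?_ ?_ fun p _ => ?_
    · exact (hf.continuousOn.comp_continuous hcont fun p => hflow p.1 p.2).continuousOn
    · exact (((hf.continuousOn_fderiv_of_isOpen hU le_rfl).comp_continuous hcont
        fun p => hflow p.1 p.2).clm_apply (A.continuous.comp hcont)).continuousOn
    · exact ((hf.contDiffAt (hU.mem_nhds (hflow p.1 p.2))).differentiableAt
        one_ne_zero).hasFDerivAt.comp_hasDerivAt p.1 (hasDerivAt_exp_smul_apply A p.2 p.1)
  have hconst : (fun t : ℝ => ∫ s : sphere (0 : E) 1, f (NormedSpace.exp (t • A) (s : E))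
      ∂(volume : Measure E).toSphere) = fun _ => ∫ s : sphere (0 : E) 1, f s
        ∂(volume : Measure E).toSphere :=
    funext fun t => integral_toSphere_comp_linearIsometryEquiv (rotationFlow hA t) f
  rw [hconst] at hderiv
  simpa using hderiv.unique (hasDerivAt_const _ _)

end Sphere

section Tangential

variable {E F ι : Type*} [NormedAddCommGroup E] [InnerProductSpace ℝ E] [NormedAddCommGroup F]
  [NormedSpace ℝ F]

/-- The skew operator `v ↦ ⟪a, v⟫ e - ⟪e, v⟫ a`, which generates the rotations in the plane spanned
by `a` and `e`. -/
noncomputable def planeRotationGenerator (a e : E) : E →L[ℝ] E :=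
  (innerSL ℝ a).smulRight e - (innerSL ℝ e).smulRight a

theorem planeRotationGenerator_apply (a e v : E) :
    planeRotationGenerator a e v = ⟪a, v⟫_ℝ • e - ⟪e, v⟫_ℝ • a := by
  simp [planeRotationGenerator]

theorem inner_self_planeRotationGenerator (a e v : E) :
    ⟪v, planeRotationGenerator a e v⟫_ℝ = 0 := by
  rw [planeRotationGenerator_apply, inner_sub_right, inner_smul_right, inner_smul_right,
    real_inner_comm v e, real_inner_comm v a]
  ring

variable [Fintype ι]

theorem sum_inner_planeRotationGenerator (b : OrthonormalBasis ι ℝ E) (e v : E) :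
    ∑ i, ⟪b i, planeRotationGenerator (b i) e v⟫_ℝ = -((Fintype.card ι : ℝ) - 1) * ⟪e, v⟫_ℝ := by
  have hparseval : ∑ i, ⟪b i, v⟫_ℝ * ⟪b i, e⟫_ℝ = ⟪e, v⟫_ℝ := by
    rw [← b.sum_inner_mul_inner e v]
    exact Finset.sum_congr rfl fun i _ => by rw [real_inner_comm e, mul_comm]
  simp only [planeRotationGenerator_apply, inner_sub_right, inner_smul_right,
    Finset.sum_sub_distrib, hparseval, b.inner_eq_one, mul_one, Finset.sum_const,
    Finset.card_univ, nsmul_eq_mul]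
  ring

theorem sum_inner_smul_planeRotationGenerator (b : OrthonormalBasis ι ℝ E) (e v : E) :
    ∑ i, ⟪b i, v⟫_ℝ • planeRotationGenerator (b i) e v = ‖v‖ ^ 2 • e - ⟪e, v⟫_ℝ • v := by
  simp only [planeRotationGenerator_apply, smul_sub, Finset.sum_sub_distrib, smul_smul, ← sq,
    ← Finset.sum_smul, b.sum_sq_inner_right, mul_comm _ ⟪e, v⟫_ℝ]
  simp only [← smul_smul, ← Finset.smul_sum, b.sum_repr']

variable [FiniteDimensional ℝ E] [MeasurableSpace E] [BorelSpace E]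

theorem integrable_toSphere_fderiv_sub_inner_smul (e : E) {U : Set E} (hU : IsOpen U)
    (hSU : sphere 0 1 ⊆ U) {f : E → F} (hf : ContDiffOn ℝ 1 f U) :
    Integrable (fun s : sphere (0 : E) 1 => fderiv ℝ f s e - ⟪e, (s : E)⟫_ℝ • fderiv ℝ f s s -
      (((Module.finrank ℝ E : ℝ) - 1) * ⟪e, (s : E)⟫_ℝ) • f s) (volume : Measure E).toSphere := by
  have hfs : Continuous fun s : sphere (0 : E) 1 => f s :=
    hf.continuousOn.comp_continuous continuous_subtype_val fun s => hSU s.2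
  have hdf : Continuous fun s : sphere (0 : E) 1 => fderiv ℝ f s :=
    (hf.continuousOn_fderiv_of_isOpen hU le_rfl).comp_continuous
      continuous_subtype_val fun s => hSU s.2
  exact integrable_of_continuous_of_compactSpace
    (((hdf.clm_apply continuous_const).sub (Continuous.smul (by fun_prop)
      (hdf.clm_apply continuous_subtype_val))).sub (Continuous.smul (by fun_prop) hfs))

theorem integral_toSphere_fderiv_sub_inner_smul_eq_zero (e : E) {U : Set E} (hU : IsOpen U)
    (hSU : sphere 0 1 ⊆ U) {f : E → F} (hf : ContDiffOn ℝ 1 f U) :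
    ∫ s : sphere (0 : E) 1, (fderiv ℝ f s e - ⟪e, (s : E)⟫_ℝ • fderiv ℝ f s s -
      (((Module.finrank ℝ E : ℝ) - 1) * ⟪e, (s : E)⟫_ℝ) • f s)
        ∂(volume : Measure E).toSphere = 0 := by
  let b := stdOrthonormalBasis ℝ E
  let A (i) : E →L[ℝ] E := planeRotationGenerator (b i) e
  -- `f` weighted by the coordinate `⟪b i, ·⟫` is differentiated along the rotations of the plane
  -- of `b i` and `e`.
  let g (i) (z : E) : F := innerSL ℝ (b i) z • f z
  have hg (i) : ContDiffOn ℝ 1 (g i) U := (innerSL ℝ (b i)).contDiff.contDiffOn.smul hf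
  have hg_fderiv (i) (s : sphere (0 : E) 1) (v : E) :
      fderiv ℝ (g i) s v = ⟪b i, (s : E)⟫_ℝ • fderiv ℝ f s v + ⟪b i, v⟫_ℝ • f s := by
    have hfs : DifferentiableAt ℝ f s :=
      (hf.contDiffAt (hU.mem_nhds (hSU s.2))).differentiableAt one_ne_zero
    simp only [g]
    rw [fderiv_fun_smul (innerSL ℝ (b i)).differentiableAt hfs, (innerSL ℝ (b i)).fderiv]
    simp
  have hsum (s : sphere (0 : E) 1) : ∑ i, fderiv ℝ (g i) s (A i s) =
      fderiv ℝ f s e - ⟪e, (s : E)⟫_ℝ • fderiv ℝ f s s -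
        (((Module.finrank ℝ E : ℝ) - 1) * ⟪e, (s : E)⟫_ℝ) • f s := by
    have hradial : ∑ i, ⟪b i, (s : E)⟫_ℝ • fderiv ℝ f s (A i s) =
        fderiv ℝ f s e - ⟪e, (s : E)⟫_ℝ • fderiv ℝ f s s := by
      have hrange : fderiv ℝ f s (∑ i, ⟪b i, (s : E)⟫_ℝ • A i s) =
          fderiv ℝ f s (e - ⟪e, (s : E)⟫_ℝ • (s : E)) := by
        simp only [A, sum_inner_smul_planeRotationGenerator, norm_eq_of_mem_sphere, one_pow,
          one_smul]
      simpa only [map_sum, map_sub, map_smul] using hrange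
    simp only [hg_fderiv, Finset.sum_add_distrib, hradial, ← Finset.sum_smul, A,
      sum_inner_planeRotationGenerator, Fintype.card_fin, neg_mul, neg_smul, sub_eq_add_neg]
  have hg_int (i) : Integrable (fun s : sphere (0 : E) 1 => fderiv ℝ (g i) s (A i s))
      (volume : Measure E).toSphere :=
    integrable_of_continuous_of_compactSpace
      ((((hg i).continuousOn_fderiv_of_isOpen hU le_rfl).comp_continuous
        continuous_subtype_val fun s => hSU s.2).clm_apply (by fun_prop))
  simp only [← hsum]
  rw [integral_finsetSum _ fun i _ => hg_int i]
  exact Finset.sum_eq_zero fun i _ => integral_toSphere_fderiv_apply_of_inner_apply_eq_zero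
    (inner_self_planeRotationGenerator (b i) e) hU hSU (hg i)

end Tangential

section SphericalMeans

variable {E F : Type*} [NormedAddCommGroup E] [InnerProductSpace ℝ E] [FiniteDimensional ℝ E]
  [NormedAddCommGroup F] [NormedSpace ℝ F]

theorem laplacian_eq_sum_fderiv_fderiv {ι : Type*} [Fintype ι] (b : OrthonormalBasis ι ℝ E)
    (f : E → F) (y : E) : Δ f y = ∑ i, fderiv ℝ (fderiv ℝ f) y (b i) (b i) := by
  simp [InnerProductSpace.laplacian_eq_iteratedFDeriv_orthonormalBasis f b,
    iteratedFDeriv_two_apply]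

variable [MeasurableSpace E] [BorelSpace E]

/-- The integral of `f` over the sphere of center `x` and radius `ρ`, as a function of `ρ`, with
respect to the surface measure of the unit sphere. It is not divided by the total mass, and makes
sense for all real `ρ`. -/
noncomputable def sphereIntegral (f : E → F) (x : E) (ρ : ℝ) : F :=
  ∫ s : sphere (0 : E) 1, f (x + ρ • (s : E)) ∂(volume : Measure E).toSphere

/-- The integral of the outer normal derivative of `f` over the sphere of center `x` and radius
`ρ`, with respect to the surface measure of the unit sphere. -/
noncomputable def sphereFlux (f : E → F) (x : E) (ρ : ℝ) : F :=
  ∫ s : sphere (0 : E) 1, fderiv ℝ f (x + ρ • (s : E)) s ∂(volume : Measure E).toSphere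

theorem sphereIntegral_zero [CompleteSpace F] (f : E → F) (x : E) :
    sphereIntegral f x 0 = (volume : Measure E).toSphere.real univ • f x := by
  simp only [sphereIntegral, zero_smul, add_zero, integral_const]

variable {U : Set E} {f : E → F} {x : E} {ρ : ℝ}

theorem hasDerivAt_integral_toSphere_clm_apply {G : Type*} [NormedAddCommGroup G]
    [NormedSpace ℝ G] {g : E → G} (hU : IsOpen U)
    (hρ : ∀ s : sphere (0 : E) 1, x + ρ • (s : E) ∈ U) (hg : ContDiffOn ℝ 1 g U)
    {B : E → G →L[ℝ] F} (hB : Continuous B) :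
    HasDerivAt
      (fun t => ∫ s : sphere (0 : E) 1, B s (g (x + t • (s : E))) ∂(volume : Measure E).toSphere)
      (∫ s : sphere (0 : E) 1, B s (fderiv ℝ g (x + ρ • (s : E)) s)
        ∂(volume : Measure E).toSphere) ρ := by
  have hray : Continuous fun p : ℝ × sphere (0 : E) 1 => x + p.1 • (p.2 : E) := by fun_prop
  have hBsnd : Continuous fun p : ℝ × sphere (0 : E) 1 => B p.2 := by fun_prop
  refine hasDerivAt_integral_of_continuousOn (K := sphere (0 : E) 1)
    (f := fun t s => B s (g (x + t • (s : E))))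
    (f' := fun t s => B s (fderiv ℝ g (x + t • (s : E)) s)) (hU.preimage hray) hρ ?_ ?_ ?_
  · exact hBsnd.continuousOn.clm_apply
      (hg.continuousOn.comp hray.continuousOn fun p hp => hp)
  · exact hBsnd.continuousOn.clm_apply
      (((hg.continuousOn_fderiv_of_isOpen hU le_rfl).comp hray.continuousOn
        fun p hp => hp).clm_apply (by fun_prop))
  · intro p hp
    have hline : HasDerivAt (fun t : ℝ => x + t • (p.2 : E)) p.2 p.1 := by
      simpa using ((hasDerivAt_id p.1).smul_const (p.2 : E)).const_add x
    exact (B p.2).hasFDerivAt.comp_hasDerivAt p.1 (((hg.contDiffAt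
      (hU.mem_nhds hp)).differentiableAt one_ne_zero).hasFDerivAt.comp_hasDerivAt p.1 hline)

theorem hasDerivAt_sphereIntegral (hU : IsOpen U)
    (hρ : ∀ s : sphere (0 : E) 1, x + ρ • (s : E) ∈ U) (hf : ContDiffOn ℝ 1 f U) :
    HasDerivAt (sphereIntegral f x) (sphereFlux f x ρ) ρ :=
  hasDerivAt_integral_toSphere_clm_apply hU hρ hf
    (continuous_const (y := ContinuousLinearMap.id ℝ F))

theorem hasDerivAt_sphereFlux (hU : IsOpen U)
    (hρ : ∀ s : sphere (0 : E) 1, x + ρ • (s : E) ∈ U) (hf : ContDiffOn ℝ 2 f U) :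
    HasDerivAt (sphereFlux f x) (∫ s : sphere (0 : E) 1,
      fderiv ℝ (fderiv ℝ f) (x + ρ • (s : E)) s s ∂(volume : Measure E).toSphere) ρ :=
  hasDerivAt_integral_toSphere_clm_apply hU hρ (hf.fderiv_of_isOpen hU (by norm_num))
    (ContinuousLinearMap.apply ℝ F).continuous

theorem integral_toSphere_laplacian_sub_fderiv_eq_zero (hU : IsOpen U)
    (hρ : ∀ s : sphere (0 : E) 1, x + ρ • (s : E) ∈ U) (hf : ContDiffOn ℝ 2 f U) :
    ∫ s : sphere (0 : E) 1, (ρ • Δ f (x + ρ • (s : E)) -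
      ρ • fderiv ℝ (fderiv ℝ f) (x + ρ • (s : E)) s s -
      ((Module.finrank ℝ E : ℝ) - 1) • fderiv ℝ f (x + ρ • (s : E)) s)
        ∂(volume : Measure E).toSphere = 0 := by
  let b := stdOrthonormalBasis ℝ E
  have hdf : ContDiffOn ℝ 1 (fderiv ℝ f) U := hf.fderiv_of_isOpen hU (by norm_num)
  let V : Set E := (fun z => x + ρ • z) ⁻¹' U
  have hV : IsOpen V := hU.preimage (by fun_prop)
  have hSV : sphere 0 1 ⊆ V := fun s hs => hρ ⟨s, hs⟩
  let g (i) (z : E) : F := fderiv ℝ f (x + ρ • z) (b i)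
  have hg (i) : ContDiffOn ℝ 1 (g i) V :=
    (hdf.comp (g := fderiv ℝ f) (f := fun z => x + ρ • z) (by fun_prop)
      fun z hz => hz).clm_apply contDiffOn_const
  have hg_fderiv (i) (s : sphere (0 : E) 1) (v : E) :
      fderiv ℝ (g i) s v = ρ • fderiv ℝ (fderiv ℝ f) (x + ρ • (s : E)) v (b i) := by
    have hline : HasFDerivAt (fun z : E => x + ρ • z) (ρ • ContinuousLinearMap.id ℝ E) s :=
      ((hasFDerivAt_id (s : E)).const_smul ρ).const_add x
    simpa using congrArg (· v) (((((hdf.contDiffAt (hU.mem_nhds (hρ s))).differentiableAt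
      one_ne_zero).hasFDerivAt.comp (s : E) hline).clm_apply
        (hasFDerivAt_const (b i) (s : E)))).fderiv
  have hsum (s : sphere (0 : E) 1) : ∑ i, (fderiv ℝ (g i) s (b i) -
      ⟪b i, (s : E)⟫_ℝ • fderiv ℝ (g i) s s -
      (((Module.finrank ℝ E : ℝ) - 1) * ⟪b i, (s : E)⟫_ℝ) • g i s) =
      ρ • Δ f (x + ρ • (s : E)) - ρ • fderiv ℝ (fderiv ℝ f) (x + ρ • (s : E)) s s -
      ((Module.finrank ℝ E : ℝ) - 1) • fderiv ℝ f (x + ρ • (s : E)) s := by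
    have hexpand (L : E →L[ℝ] F) : ∑ i, ⟪b i, (s : E)⟫_ℝ • L (b i) = L s := by
      simp only [← map_smul, ← map_sum, b.sum_repr']
    simp only [Finset.sum_sub_distrib, hg_fderiv, g, smul_comm _ ρ, mul_smul, ← Finset.smul_sum,
      hexpand, laplacian_eq_sum_fderiv_fderiv b]
  simp only [← hsum]
  rw [integral_finsetSum _ fun i _ =>
    integrable_toSphere_fderiv_sub_inner_smul (b i) hV hSV (hg i)]
  exact Finset.sum_eq_zero fun i _ =>
    integral_toSphere_fderiv_sub_inner_smul_eq_zero (b i) hV hSV (hg i)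

theorem smul_integral_toSphere_fderiv_fderiv_add_smul_sphereFlux (hU : IsOpen U)
    (hρ : ∀ s : sphere (0 : E) 1, x + ρ • (s : E) ∈ U) (hf : ContDiffOn ℝ 2 f U) :
    ρ • (∫ s : sphere (0 : E) 1, fderiv ℝ (fderiv ℝ f) (x + ρ • (s : E)) s s
        ∂(volume : Measure E).toSphere) + ((Module.finrank ℝ E : ℝ) - 1) • sphereFlux f x ρ =
      ρ • sphereIntegral (Δ f) x ρ := by
  have hdf : ContDiffOn ℝ 1 (fderiv ℝ f) U := hf.fderiv_of_isOpen hU (by norm_num)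
  have hray : Continuous fun s : sphere (0 : E) 1 => x + ρ • (s : E) := by fun_prop
  have hdf_cont : Continuous fun s : sphere (0 : E) 1 => fderiv ℝ f (x + ρ • (s : E)) :=
    hdf.continuousOn.comp_continuous hray hρ
  have hddf_cont : Continuous fun s : sphere (0 : E) 1 =>
      fderiv ℝ (fderiv ℝ f) (x + ρ • (s : E)) :=
    (hdf.continuousOn_fderiv_of_isOpen hU le_rfl).comp_continuous hray hρ
  have hΔ_cont : Continuous fun s : sphere (0 : E) 1 => Δ f (x + ρ • (s : E)) := by
    simp only [laplacian_eq_sum_fderiv_fderiv (stdOrthonormalBasis ℝ E)]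
    fun_prop
  have hzero := integral_toSphere_laplacian_sub_fderiv_eq_zero hU hρ hf
  rw [integral_sub, integral_sub, integral_smul, integral_smul, integral_smul, sub_sub,
    sub_eq_zero] at hzero
  · exact hzero.symm
  all_goals exact integrable_of_continuous_of_compactSpace (by fun_prop)

end SphericalMeans

section Oscillator

theorem sq_smul_intervalIntegral_eq_of_hasDerivAt {F : Type*} [NormedAddCommGroup F]
    [NormedSpace ℝ F] [CompleteSpace F] {w v : ℝ → F} {k r : ℝ}
    (hw : ∀ t ∈ uIcc 0 r, HasDerivAt w (v t) t)
    (hv : ∀ t ∈ uIcc 0 r, HasDerivAt v (-(k ^ 2) • w t) t) :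
    k ^ 2 • ∫ t in 0..r, w t =
      (1 - Real.cos (k * r)) • v 0 + (k * Real.sin (k * r)) • w 0 := by
  have hsub (t : ℝ) : HasDerivAt (fun t => k * (r - t)) (-k) t := by
    simpa using ((hasDerivAt_id t).const_sub r).const_mul k
  -- `cos (k (r - t)) - 1` vanishes to second order at `t = r`, so `w r` and `v r` drop out.
  have hprim : ∀ t ∈ uIcc 0 r, HasDerivAt (fun t => (Real.cos (k * (r - t)) - 1) • v t -
      (k * Real.sin (k * (r - t))) • w t) (k ^ 2 • w t) t := fun t ht => by
    refine ((((hsub t).cos.sub_const 1).smul (hv t ht)).sub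
      (((hsub t).sin.const_mul k).smul (hw t ht))).congr_deriv ?_
    module
  have hcont : ContinuousOn w (uIcc 0 r) := fun t ht => (hw t ht).continuousAt.continuousWithinAt
  rw [← intervalIntegral.integral_smul, intervalIntegral.integral_eq_sub_of_hasDerivAt hprim
    (hcont.const_smul _).intervalIntegrable]
  simp only [sub_self, mul_zero, Real.cos_zero, Real.sin_zero, zero_smul, sub_zero]
  module

end Oscillator

section Polar

variable {E F : Type*} [NormedAddCommGroup E] [NormedSpace ℝ E] [FiniteDimensional ℝ E]
  [MeasurableSpace E] [BorelSpace E] [Nontrivial E] (μ : Measure E) [μ.IsAddHaarMeasure]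
  [NormedAddCommGroup F] [NormedSpace ℝ F]

theorem integral_eq_integral_Ioi_smul_integral_toSphere {f : E → F} (hf : Integrable f μ) :
    ∫ y, f y ∂μ = ∫ ρ in Ioi (0 : ℝ), ρ ^ (Module.finrank ℝ E - 1) •
      ∫ s : sphere (0 : E) 1, f (ρ • (s : E)) ∂μ.toSphere := by
  have hpolar := μ.measurePreserving_homeomorphUnitSphereProd
  have hemb := (homeomorphUnitSphereProd E).measurableEmbedding
  let g (p : sphere (0 : E) 1 × Ioi (0 : ℝ)) : F := f ((p.2 : ℝ) • (p.1 : E))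
  have hg (z : ({0}ᶜ : Set E)) : g (homeomorphUnitSphereProd E z) = f z := by
    simp [g, smul_smul, norm_ne_zero_iff.2 z.2]
  have hg_int : Integrable g (μ.toSphere.prod (.volumeIoiPow (Module.finrank ℝ E - 1))) := by
    rw [← hpolar.integrable_comp_emb hemb]
    simp only [Function.comp_def, hg]
    exact (integrableOn_iff_comap_subtypeVal (measurableSet_singleton _).compl).1 hf.integrableOn
  calc
    ∫ y, f y ∂μ = ∫ z : ({0}ᶜ : Set E), f z ∂(μ.comap (↑)) := by
      rw [integral_subtype_comap (measurableSet_singleton _).compl f,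
        restrict_compl_singleton]
    _ = ∫ p, g p ∂μ.toSphere.prod (.volumeIoiPow (Module.finrank ℝ E - 1)) := by
      simpa only [hg] using hpolar.integral_comp hemb g
    _ = ∫ ρ : Ioi (0 : ℝ), ∫ s, g (s, ρ) ∂μ.toSphere
          ∂.volumeIoiPow (Module.finrank ℝ E - 1) := integral_prod_symm g hg_int
    _ = _ := by
      simp only [Measure.volumeIoiPow, ENNReal.ofReal]
      rw [integral_withDensity_eq_integral_smul (by fun_prop),
        integral_subtype_comap measurableSet_Ioi fun ρ =>
          Real.toNNReal (ρ ^ (Module.finrank ℝ E - 1)) •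
            ∫ s : sphere (0 : E) 1, f (ρ • (s : E)) ∂μ.toSphere]
      refine setIntegral_congr_fun measurableSet_Ioi fun ρ hρ => ?_
      simp only [NNReal.smul_def, Real.coe_toNNReal _ (pow_nonneg (le_of_lt hρ) _)]

theorem integral_closedBall_eq_intervalIntegral {f : E → F} {x : E} {r : ℝ} (hr : 0 ≤ r)
    (hf : IntegrableOn f (closedBall x r) μ) :
    ∫ y in closedBall x r, f y ∂μ = ∫ ρ in 0..r, ρ ^ (Module.finrank ℝ E - 1) •
      ∫ s : sphere (0 : E) 1, f (x + ρ • (s : E)) ∂μ.toSphere := by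
  let g : E → F := (closedBall x r).indicator f
  have hg_int : Integrable (fun z => g (x + z)) μ :=
    ((integrable_indicator_iff measurableSet_closedBall).2 hf).comp_add_left x
  have hg (ρ : ℝ) (hρ : 0 < ρ) (s : sphere (0 : E) 1) :
      g (x + ρ • (s : E)) = (Iic r).indicator (fun ρ => f (x + ρ • (s : E))) ρ := by
    simp [g, indicator, mem_closedBall, norm_smul, abs_of_pos hρ]
  calc
    ∫ y in closedBall x r, f y ∂μ = ∫ z, g (x + z) ∂μ := by
      rw [← integral_indicator measurableSet_closedBall, integral_add_left_eq_self g x]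
    _ = ∫ ρ in Ioi (0 : ℝ), ρ ^ (Module.finrank ℝ E - 1) •
          ∫ s : sphere (0 : E) 1, g (x + ρ • (s : E)) ∂μ.toSphere :=
      integral_eq_integral_Ioi_smul_integral_toSphere μ hg_int
    _ = ∫ ρ in Ioi (0 : ℝ), (Iic r).indicator (fun ρ => ρ ^ (Module.finrank ℝ E - 1) •
          ∫ s : sphere (0 : E) 1, f (x + ρ • (s : E)) ∂μ.toSphere) ρ := by
      refine setIntegral_congr_fun measurableSet_Ioi fun ρ hρ => ?_
      by_cases hρr : ρ ≤ r <;> simp [hg ρ hρ, hρr]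
    _ = _ := by
      rw [setIntegral_indicator measurableSet_Iic, Ioi_inter_Iic,
        intervalIntegral.integral_of_le hr]

theorem integrableOn_inv_norm_sub_closedBall (hd : 1 < Module.finrank ℝ E) (x : E) (r : ℝ) :
    IntegrableOn (fun y => ‖y - x‖⁻¹) (closedBall x r) μ := by
  have hzero : IntegrableOn (fun z : E => ‖z‖⁻¹) (ball 0 (r + 1)) μ := by
    rw [integrableOn_fun_norm_addHaar μ (f := fun t => t⁻¹)]
    have hpow : IntegrableOn (fun t : ℝ => t ^ (Module.finrank ℝ E - 2)) (Ioo 0 (r + 1)) :=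
      (continuous_pow _).integrableOn_Icc.mono_set Ioo_subset_Icc_self
    refine hpow.congr_fun (fun t ht => ?_) measurableSet_Ioo
    have : Module.finrank ℝ E - 1 = Module.finrank ℝ E - 2 + 1 := by omega
    simp [this, pow_succ, ht.1.ne']
  have hball : IntegrableOn (fun y => ‖y - x‖⁻¹) (ball x (r + 1)) μ := by
    rw [← (measurePreserving_sub_right μ x).integrableOn_comp_preimage
      (measurableEmbedding_subRight x)] at hzero
    have hpre : (· - x) ⁻¹' ball 0 (r + 1) = ball x (r + 1) := by
      ext y
      simp [dist_eq_norm]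
    rwa [hpre] at hzero
  exact hball.mono_set (closedBall_subset_ball (lt_add_one r))

end Polar

section Coulomb

variable {E F : Type*} [NormedAddCommGroup E] [InnerProductSpace ℝ E] [FiniteDimensional ℝ E]
  [MeasurableSpace E] [BorelSpace E] [NormedAddCommGroup F] [NormedSpace ℝ F]
  {U : Set E} {f : E → F} {x : E} {ρ r k : ℝ}

theorem hasDerivAt_smul_sphereIntegral (hU : IsOpen U)
    (hρ : ∀ s : sphere (0 : E) 1, x + ρ • (s : E) ∈ U) (hf : ContDiffOn ℝ 1 f U) :
    HasDerivAt (fun t => t • sphereIntegral f x t)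
      (sphereIntegral f x ρ + ρ • sphereFlux f x ρ) ρ :=
  ((hasDerivAt_id ρ).smul (hasDerivAt_sphereIntegral hU hρ hf)).congr_deriv
    (by rw [one_smul, add_comm]; rfl)

theorem hasDerivAt_sphereIntegral_add_smul_sphereFlux (hd : Module.finrank ℝ E = 3)
    (hU : IsOpen U) (hρ : ∀ s : sphere (0 : E) 1, x + ρ • (s : E) ∈ U)
    (hf : ContDiffOn ℝ 2 f U) :
    HasDerivAt (fun t => sphereIntegral f x t + t • sphereFlux f x t)
      (ρ • sphereIntegral (Δ f) x ρ) ρ := by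
  refine ((hasDerivAt_sphereIntegral hU hρ (hf.of_le (by norm_num))).add
    ((hasDerivAt_id ρ).smul (hasDerivAt_sphereFlux hU hρ hf))).congr_deriv ?_
  rw [← smul_integral_toSphere_fderiv_fderiv_add_smul_sphereFlux hU hρ hf, hd, id,
    Nat.cast_ofNat]
  module

theorem sphereIntegral_laplacian_eq_neg_sq_smul (hρ : ρ ∈ Icc 0 r)
    (hΔ : ∀ y ∈ closedBall x r, Δ f y = -(k ^ 2) • f y) :
    sphereIntegral (Δ f) x ρ = -(k ^ 2) • sphereIntegral f x ρ := by
  rw [sphereIntegral, sphereIntegral, ← integral_smul]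
  refine integral_congr_ae (ae_of_all _ fun s => hΔ _ ?_)
  simp [norm_smul, abs_of_nonneg hρ.1, hρ.2]

theorem integral_closedBall_inv_norm_sub_smul (hd : Module.finrank ℝ E = 3) (hr : 0 ≤ r)
    (hf : ContinuousOn f (closedBall x r)) :
    ∫ y in closedBall x r, ‖y - x‖⁻¹ • f y = ∫ ρ in 0..r, ρ • sphereIntegral f x ρ := by
  have : Nontrivial E := Module.nontrivial_of_finrank_pos (R := ℝ) (by omega)
  have hint : IntegrableOn (fun y => ‖y - x‖⁻¹ • f y) (closedBall x r) :=
    (integrableOn_inv_norm_sub_closedBall volume (by omega) x r).smul_continuousOn hf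
      (isCompact_closedBall x r)
  rw [integral_closedBall_eq_intervalIntegral volume hr hint]
  refine intervalIntegral.integral_congr fun ρ hρ => ?_
  rw [uIcc_of_le hr] at hρ
  rcases hρ.1.eq_or_lt with rfl | hρ0
  · simp [hd]
  · simp only [add_sub_cancel_left, norm_smul, norm_eq_of_mem_sphere, integral_smul, mul_one,
      Real.norm_of_nonneg hρ.1, hd, smul_smul, sphereIntegral]
    congr 1
    field_simp

theorem sq_smul_integral_closedBall_inv_norm_sub_smul_of_laplacian_eq
    [CompleteSpace F] (hd : Module.finrank ℝ E = 3) (hr : 0 ≤ r) (hU : IsOpen U)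
    (hBU : closedBall x r ⊆ U) (hf : ContDiffOn ℝ 2 f U)
    (hΔ : ∀ y ∈ closedBall x r, Δ f y = -(k ^ 2) • f y) :
    k ^ 2 • ∫ y in closedBall x r, ‖y - x‖⁻¹ • f y =
      ((1 - Real.cos (k * r)) * (volume : Measure E).toSphere.real univ) • f x := by
  have hmem {t : ℝ} (ht : t ∈ Icc 0 r) (s : sphere (0 : E) 1) : x + t • (s : E) ∈ U :=
    hBU (by simp [norm_smul, abs_of_nonneg ht.1, ht.2])
  rw [integral_closedBall_inv_norm_sub_smul hd hr (hf.continuousOn.mono hBU),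
    sq_smul_intervalIntegral_eq_of_hasDerivAt
      (v := fun t => sphereIntegral f x t + t • sphereFlux f x t)
      (fun t ht => ?_) fun t ht => ?_]
  · simp only [zero_smul, smul_zero, add_zero, sphereIntegral_zero]
    rw [smul_smul]
  · rw [uIcc_of_le hr] at ht
    exact hasDerivAt_smul_sphereIntegral hU (hmem ht) (hf.of_le (by norm_num))
  · rw [uIcc_of_le hr] at ht
    convert hasDerivAt_sphereIntegral_add_smul_sphereFlux hd hU (hmem ht) hf using 1
    rw [sphereIntegral_laplacian_eq_neg_sq_smul ht hΔ, smul_comm]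

theorem euclidLaplacian_eq_laplacian {d : ℕ} {f : EuclideanSpace ℝ (Fin d) → ℝ}
    {y : EuclideanSpace ℝ (Fin d)} (hf : ContDiffAt ℝ 2 f y) : euclidLaplacian f y = Δ f y := by
  have hdf : DifferentiableAt ℝ (fderiv ℝ f) y :=
    (hf.fderiv_right (m := 1) (by norm_num)).differentiableAt one_ne_zero
  simp only [euclidLaplacian, laplacian_eq_sum_fderiv_fderiv (EuclideanSpace.basisFun (Fin d) ℝ),
    EuclideanSpace.basisFun_apply]
  refine Finset.sum_congr rfl fun i _ => ?_
  simp [fderiv_clm_apply hdf (differentiableAt_const _)]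

theorem toSphere_real_univ_euclideanSpace_fin_three :
    (volume : Measure (EuclideanSpace ℝ (Fin 3))).toSphere.real univ = 4 * π := by
  rw [Measure.toSphere_real_apply_univ, measureReal_def, EuclideanSpace.volume_ball_fin_three,
    ENNReal.toReal_mul, ENNReal.toReal_pow, ENNReal.toReal_ofReal zero_le_one,
    ENNReal.toReal_ofReal (by positivity), finrank_euclideanSpace_fin]
  push_cast
  ring

theorem eigenfunction_coulomb_balance_general {lam : ℝ} (hlam : 0 < lam)
    {x : EuclideanSpace ℝ (Fin 3)} {r : ℝ} (hr : 0 ≤ r) {U : Set (EuclideanSpace ℝ (Fin 3))}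
    (hU : IsOpen U) (hBU : closedBall x r ⊆ U) {φ : EuclideanSpace ℝ (Fin 3) → ℝ}
    (hφ : ContDiffOn ℝ 2 φ U)
    (heig : ∀ y ∈ closedBall x r, euclidLaplacian φ y = -lam * φ y) :
    ∫ y in closedBall x r, φ y / ‖y - x‖ =
      4 * π * (1 - Real.cos (√lam * r)) / lam * φ x := by
  have hd : Module.finrank ℝ (EuclideanSpace ℝ (Fin 3)) = 3 := finrank_euclideanSpace_fin
  have hΔ : ∀ y ∈ closedBall x r, Δ φ y = -(√lam ^ 2) • φ y := fun y hy => by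
    rw [← euclidLaplacian_eq_laplacian (hφ.contDiffAt (hU.mem_nhds (hBU hy))), heig y hy,
      Real.sq_sqrt hlam.le, smul_eq_mul]
  have hball := sq_smul_integral_closedBall_inv_norm_sub_smul_of_laplacian_eq hd hr hU hBU hφ hΔ
  simp only [toSphere_real_univ_euclideanSpace_fin_three, Real.sq_sqrt hlam.le, smul_eq_mul,
    inv_mul_eq_div] at hball
  field_simp
  linarith

end Coulomb

/-- If `−Δφ = λφ` on a neighborhood of the closed ball of radius `r = 2π/√λ` around
`x ∈ ℝ³`, then the positive and negative mass of `φ` on that ball balance exactly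
against the Coulomb kernel: `∫_{‖x−y‖ ≤ 2πλ^{-1/2}} φ(y)/‖y−x‖ dy = 0`. -/
theorem eigenfunction_coulomb_balance (lam : ℝ) (hlam : 0 < lam)
    (x : EuclideanSpace ℝ (Fin 3)) (r : ℝ) (hr : r = 2 * π / Real.sqrt lam)
    (U : Set (EuclideanSpace ℝ (Fin 3))) (hU : IsOpen U) (hBU : Metric.closedBall x r ⊆ U)
    (φ : EuclideanSpace ℝ (Fin 3) → ℝ) (hφ : ContDiffOn ℝ (⊤ : ℕ∞) φ U)
    (heig : ∀ y ∈ U, euclidLaplacian φ y = -lam * φ y) :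
    ∫ y in Metric.closedBall x r, φ y / ‖y - x‖ = 0 := by
  rw [eigenfunction_coulomb_balance_general hlam (hr ▸ by positivity) hU hBU
    (hφ.of_le ENat.LEInfty.out) fun y hy => heig y (hBU hy), hr,
    mul_div_cancel₀ _ (Real.sqrt_pos.2 hlam).ne', Real.cos_two_pi]
  simp
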